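/- Let g: {-1,1}^n → [-1,1], let δ, ε > 0, let N = ⌈n ln(n/δ)⌉, let m ≥ (2N/ε²) ln(2N/δ), and let x^1, …, x^m be a random walk on {-1,1}^n. Then with probability at least 1 − δ, |(1/m) ∑_{i=1}^m g(x^i) − E_x[g(x)]| ≤ ε, where the expectation is over x uniformly distributed on {-1,1}^n. -/

import Mathlib

/-!
The proof is a Chernoff bound for the random walk through its spectral gap; no mixing or coupling
is used, so the periodicity of the walk is harmless.

Let `P` be the transition operator on functions on the cube, `f = g - E g`, `θ ≥ 0`, and let `D` be
multiplication by `exp (θ f / 2)`. Since the start is uniform,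
`E exp (θ ∑_{t ≤ m} f (x^t)) = ⟨D 1, (D P D)^(m-1) D 1⟩`, so the operator norm of `D P D` has to be
bounded by `r = exp (n θ² / 2)`. As `P` is symmetric with nonnegative entries, it is enough to bound
the quadratic form from above (`tilted_norm_le`). The Poincaré inequality gives
`⟨w, P w⟩ ≤ (1 - γ) E w² + γ (E w)²` with `γ = 2 / n` (`walkAvg_gap`). The mean term is absorbed by
`(E w)² ≤ E[(1 + s² - s f) w²]`, `s = θ / γ`, which is Cauchy–Schwarz together with
`E[(1 + s² - s f)⁻¹] ≤ 1` (`sq_sum_le_weighted`). The total is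
`E[(1 + γ s² - θ f) w²] ≤ exp (γ s²) E[exp (-θ f) w²]`, and `γ s² = n θ² / 2`.

With `θ = ε / n` each tail has probability at most `exp (-m ε² / (2 n))` (`card_upper_le`). For
`δ < 1` one has `N ≥ n`, so the hypothesis on `m` makes the sum of both tails at most `δ / N ≤ δ`;
for `δ ≥ 1` there is nothing to prove.
-/

noncomputable section

/-- `rwPoint x0 idx t` is the position of the random walk on `{-1,1}^n` after `t` steps,
starting from `x0`, where the `(t+1)`-st step flips coordinate `idx t`. -/
def rwPoint {n : ℕ} (x0 : Fin n → Bool) (idx : ℕ → Fin n) : ℕ → Fin n → Bool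
  | 0 => x0
  | t + 1 => Function.update (rwPoint x0 idx t) (idx t) (!(rwPoint x0 idx t (idx t)))

/-! ### Poincaré inequality on the hypercube -/

/-- The point `x` with its `i`-th coordinate flipped. -/
def flipAt {n : ℕ} (x : Fin n → Bool) (i : Fin n) : Fin n → Bool :=
  Function.update x i (!(x i))

lemma flipAt_flipAt {n : ℕ} (x : Fin n → Bool) (i : Fin n) : flipAt (flipAt x i) i = x := by
  simp [flipAt]

lemma sum_flipAt {n : ℕ} (F : (Fin n → Bool) → ℝ) (i : Fin n) :
    ∑ x, F (flipAt x i) = ∑ x, F x :=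
  Equiv.sum_comp (Function.Involutive.toPerm (fun x => flipAt x i)
    (fun x => flipAt_flipAt x i)) F

lemma flipAt_cons_zero {n : ℕ} (a : Bool) (y : Fin n → Bool) :
    flipAt (Fin.cons a y : Fin (n + 1) → Bool) 0 = Fin.cons (!a) y := by
  simp [flipAt]

lemma flipAt_cons_succ {n : ℕ} (a : Bool) (y : Fin n → Bool) (i : Fin n) :
    flipAt (Fin.cons a y : Fin (n + 1) → Bool) i.succ = Fin.cons a (flipAt y i) := by
  simp [flipAt, Fin.cons_update]

lemma sum_cons {α : Type*} [Fintype α] {n : ℕ} (F : (Fin (n + 1) → α) → ℝ) :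
    ∑ x, F x = ∑ a : α, ∑ y : Fin n → α, F (Fin.cons a y) := by
  rw [← Equiv.sum_comp (Fin.consEquiv (fun _ => α)) F, Fintype.sum_prod_type]
  rfl

/-- Spectral gap of the hypercube in unnormalised form (Efron–Stein for uniform bits), by
induction on the dimension: splitting off one coordinate adds the square of the difference of the
two half-sums, which Cauchy–Schwarz bounds by the new direction's energy. -/
theorem poincare {n : ℕ} (w : (Fin n → Bool) → ℝ) :
    2 ^ n * ∑ x, w x ^ 2 - (∑ x, w x) ^ 2 ≤
      2 ^ n / 4 * ∑ i, ∑ x, (w x - w (flipAt x i)) ^ 2 := by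
  induction n with
  | zero => simp
  | succ n ih =>
    have h0 := ih (fun y => w (Fin.cons false y))
    have h1 := ih (fun y => w (Fin.cons true y))
    have hcs : (∑ y : Fin n → Bool, (w (Fin.cons false y) - w (Fin.cons true y))) ^ 2 ≤
        2 ^ n * ∑ y : Fin n → Bool, (w (Fin.cons false y) - w (Fin.cons true y)) ^ 2 := by
      simpa using sq_sum_le_card_mul_sum_sq (s := (Finset.univ : Finset (Fin n → Bool)))
        (f := fun y => w (Fin.cons false y) - w (Fin.cons true y))
    have hsym : ∑ y : Fin n → Bool, (w (Fin.cons true y) - w (Fin.cons false y)) ^ 2 =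
        ∑ y : Fin n → Bool, (w (Fin.cons false y) - w (Fin.cons true y)) ^ 2 :=
      Finset.sum_congr rfl fun y _ => by ring
    rw [Finset.sum_sub_distrib] at hcs
    simp only [sum_cons, Fin.sum_univ_succ, flipAt_cons_zero, flipAt_cons_succ,
      Fintype.sum_bool, Bool.not_true, Bool.not_false, Finset.sum_add_distrib, hsym, pow_succ (2 : ℝ) n]
    nlinarith

/-! ### A weighted Cauchy–Schwarz inequality -/

/-- The inequality behind the sharp constant: a centred `f` with values in an interval of length
`2` satisfies `E[(1 + s² - s f)⁻¹] ≤ 1`, so Cauchy–Schwarz bounds `(E w)²` by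
`E[(1 + s² - s f) w²]`. -/
theorem sq_sum_le_weighted {X : Type*} [Fintype X] (f w : X → ℝ) (b s : ℝ) (hb : 0 ≤ b)
    (hs : 0 ≤ s) (hf : ∀ x, -b ≤ f x ∧ f x ≤ 2 - b) (hf0 : ∑ x, f x = 0) :
    (∑ x, w x) ^ 2 ≤ Fintype.card X * ∑ x, (1 + s ^ 2 - s * f x) * w x ^ 2 := by
  rcases hb.eq_or_lt with rfl | hb
  · have hz : ∀ x, f x = 0 := by
      have := (Finset.sum_eq_zero_iff_of_nonneg (s := Finset.univ) (f := f)
        (fun x _ => by simpa using (hf x).1)).1 hf0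
      simpa using this
    calc (∑ x, w x) ^ 2 ≤ Fintype.card X * ∑ x, w x ^ 2 := by
          simpa using sq_sum_le_card_mul_sum_sq (s := (Finset.univ : Finset X)) (f := w)
      _ ≤ _ := by
          gcongr with x
          rw [hz]; nlinarith [mul_nonneg (sq_nonneg s) (sq_nonneg (w x))]
  · have hq : ∀ x, 0 < 1 + s ^ 2 - s * f x := fun x => by
      rcases hs.eq_or_lt with rfl | hs
      · norm_num
      · nlinarith [sq_nonneg (1 - s), mul_pos hs hb, mul_le_mul_of_nonneg_left (hf x).2 hs.le]
    -- The secant-type bound `hpt` is an equality at `f x = -b`; after clearing the denominator its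
    -- remaining linear factor is at least `(1 - s - b) ^ 2`, its value at `f x = 2 - b`.
    have hK : 0 < b * (1 + s ^ 2 + s * b) := by positivity
    have hpt : ∀ x, b * (1 + s ^ 2 + s * b) * (1 + s ^ 2 - s * f x)⁻¹ ≤
        b * (1 + s ^ 2 + s * b) + s * (s + b) * f x := fun x => by
      rw [← div_eq_mul_inv, div_le_iff₀ (hq x), ← sub_nonneg]
      have h1 : 0 ≤ 1 + s ^ 2 + s * b - (s + b) * f x := by
        nlinarith [sq_nonneg (1 - s - b),
          mul_le_mul_of_nonneg_left (hf x).2 (add_nonneg hs hb.le)]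
      have h2 : 0 ≤ (f x + b) * s ^ 2 * (1 + s ^ 2 + s * b - (s + b) * f x) :=
        mul_nonneg (mul_nonneg (by linarith [(hf x).1]) (sq_nonneg s)) h1
      refine h2.trans_eq ?_
      ring
    have hinv : ∑ x, (1 + s ^ 2 - s * f x)⁻¹ ≤ (Fintype.card X : ℝ) := by
      have h := Finset.sum_le_sum fun x (_ : x ∈ Finset.univ) => hpt x
      rw [← Finset.mul_sum, Finset.sum_add_distrib, ← Finset.mul_sum _ f, hf0, mul_zero,
        add_zero, Finset.sum_const, nsmul_eq_mul, mul_comm (Finset.card _ : ℝ)] at h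
      exact le_of_mul_le_mul_left h hK
    calc (∑ x, w x) ^ 2
        ≤ (∑ x, (1 + s ^ 2 - s * f x)⁻¹) * ∑ x, (1 + s ^ 2 - s * f x) * w x ^ 2 := by
          refine Finset.sum_sq_le_sum_mul_sum_of_sq_le_mul _ (fun x _ => (inv_pos.2 (hq x)).le)
            (fun x _ => mul_nonneg (hq x).le (sq_nonneg _)) (fun x _ => le_of_eq ?_)
          rw [← mul_assoc, inv_mul_cancel₀ (hq x).ne', one_mul]
      _ ≤ _ := by
          gcongr
          exact Finset.sum_nonneg fun x _ => mul_nonneg (hq x).le (sq_nonneg _)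

/-! ### The transition operator -/

/-- The transition operator of the walk: the average of `p` over the `n` neighbours of `x`. -/
def walkAvg {n : ℕ} (p : (Fin n → Bool) → ℝ) (x : Fin n → Bool) : ℝ :=
  (n : ℝ)⁻¹ * ∑ i, p (flipAt x i)

lemma walkAvg_symm {n : ℕ} (p q : (Fin n → Bool) → ℝ) :
    ∑ x, p x * walkAvg q x = ∑ x, q x * walkAvg p x := by
  have h : ∀ i : Fin n, ∑ x, p x * q (flipAt x i) = ∑ x, q x * p (flipAt x i) := fun i => by
    rw [← sum_flipAt (fun x => p x * q (flipAt x i)) i]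
    exact Finset.sum_congr rfl fun x _ => by rw [flipAt_flipAt, mul_comm]
  simp only [walkAvg, mul_left_comm _ (n : ℝ)⁻¹, ← Finset.mul_sum]
  congr 1
  simp only [Finset.mul_sum]
  rw [Finset.sum_comm, Finset.sum_congr rfl (fun i _ => h i), Finset.sum_comm]

lemma walkAvg_add {n : ℕ} (p q : (Fin n → Bool) → ℝ) (x : Fin n → Bool) :
    walkAvg (fun y => p y + q y) x = walkAvg p x + walkAvg q x := by
  simp [walkAvg, Finset.sum_add_distrib, mul_add]

lemma walkAvg_sub {n : ℕ} (p q : (Fin n → Bool) → ℝ) (x : Fin n → Bool) :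
    walkAvg (fun y => p y - q y) x = walkAvg p x - walkAvg q x := by
  simp [walkAvg, Finset.sum_sub_distrib, mul_sub]

lemma abs_walkAvg_le {n : ℕ} (p : (Fin n → Bool) → ℝ) (x : Fin n → Bool) :
    |walkAvg p x| ≤ walkAvg (fun y => |p y|) x := by
  unfold walkAvg
  rw [abs_mul, abs_of_nonneg (by positivity : (0 : ℝ) ≤ (n : ℝ)⁻¹)]
  gcongr
  exact Finset.abs_sum_le_sum_abs _ _

/-- The second largest eigenvalue of the walk is at most `1 - 2 / n`, as a quadratic form bound. -/
theorem walkAvg_gap {n : ℕ} (hn : 1 ≤ n) (w : (Fin n → Bool) → ℝ) :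
    ∑ x, w x * walkAvg w x ≤
      (1 - 2 / n) * ∑ x, w x ^ 2 + 2 / n * ((2 ^ n)⁻¹ * (∑ x, w x) ^ 2) := by
  have hn' : (0 : ℝ) < n := by exact_mod_cast hn
  have h := poincare w
  have hD : ∑ i, ∑ x, (w x - w (flipAt x i)) ^ 2 =
      2 * n * ∑ x, w x ^ 2 - 2 * n * ∑ x, w x * walkAvg w x := by
    have h1 : ∀ i : Fin n, ∑ x, (w x - w (flipAt x i)) ^ 2 =
        2 * ∑ x, w x ^ 2 - 2 * ∑ x, w x * w (flipAt x i) := fun i => by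
      have h2 := sum_flipAt (fun x => w x ^ 2) i
      have h3 : ∑ x, (w x - w (flipAt x i)) ^ 2 =
          ∑ x, w x ^ 2 + ∑ x, w (flipAt x i) ^ 2 - 2 * ∑ x, w x * w (flipAt x i) := by
        rw [Finset.mul_sum, ← Finset.sum_add_distrib, ← Finset.sum_sub_distrib]
        exact Finset.sum_congr rfl fun x _ => by ring
      rw [h3, h2]; ring
    rw [Finset.sum_congr rfl fun i _ => h1 i, Finset.sum_sub_distrib, Finset.sum_const,
      ← Finset.mul_sum, Finset.sum_comm]
    simp only [walkAvg, mul_left_comm _ (n : ℝ)⁻¹, ← Finset.mul_sum]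
    rw [Finset.card_univ, Fintype.card_fin, nsmul_eq_mul]
    field_simp
  rw [hD] at h
  have h2 : (0 : ℝ) < 2 ^ n := by positivity
  rw [← sub_nonneg]
  have h3 : (0 : ℝ) ≤ 2 / n * (2 ^ n)⁻¹ * (2 ^ n / 4 * (2 * n * ∑ x, w x ^ 2 -
      2 * n * ∑ x, w x * walkAvg w x) - (2 ^ n * ∑ x, w x ^ 2 - (∑ x, w x) ^ 2)) :=
    mul_nonneg (by positivity) (by linarith)
  refine h3.trans_eq ?_
  field_simp
  ring

/-! ### The tilted operator and its norm -/

section Tilted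

variable {n : ℕ} (f : (Fin n → Bool) → ℝ) (b θ : ℝ)

/-- With `D` the multiplication by `exp (θ f / 2)` and `P` the transition operator, this is the
form bound `⟨v, D P D v⟩ ≤ exp (n θ² / 2) ⟨v, v⟩`, written for `w = D v`. -/
theorem tilted_form_le (hn : 1 ≤ n) (hb : 0 ≤ b) (hθ : 0 ≤ θ)
    (hf : ∀ x, -b ≤ f x ∧ f x ≤ 2 - b) (hf0 : ∑ x, f x = 0) (w : (Fin n → Bool) → ℝ) :
    ∑ x, w x * walkAvg w x ≤
      Real.exp (n * θ ^ 2 / 2) * ∑ x, Real.exp (-(θ * f x)) * w x ^ 2 := by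
  have hn' : (0 : ℝ) < n := by exact_mod_cast hn
  have h1 := walkAvg_gap hn w
  -- `s = θ / γ` for the gap `γ = 2 / n`, so that `(1 - γ) + γ (1 + s² - s f) = 1 + γ s² - θ f`,
  -- which is at most `exp (γ s² - θ f)`.
  have h2 := sq_sum_le_weighted f w b (n * θ / 2) hb (by positivity) hf hf0
  have h3 : (2 ^ n : ℝ)⁻¹ * (∑ x, w x) ^ 2 ≤
      ∑ x, (1 + (n * θ / 2) ^ 2 - n * θ / 2 * f x) * w x ^ 2 := by
    rw [inv_mul_le_iff₀ (by positivity)]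
    simpa using h2
  have h4 : (2 / n : ℝ) * ((2 ^ n : ℝ)⁻¹ * (∑ x, w x) ^ 2) ≤
      2 / n * ∑ x, (1 + (n * θ / 2) ^ 2 - n * θ / 2 * f x) * w x ^ 2 := by gcongr
  refine (h1.trans (add_le_add_right h4 _)).trans ?_
  rw [Finset.mul_sum, Finset.mul_sum, Finset.mul_sum, ← Finset.sum_add_distrib]
  refine Finset.sum_le_sum fun x _ => ?_
  have h5 := Real.add_one_le_exp (n * θ ^ 2 / 2 + -(θ * f x))
  rw [← mul_assoc, ← mul_assoc, ← Real.exp_add, ← add_mul]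
  refine mul_le_mul_of_nonneg_right (le_trans (le_of_eq ?_) h5) (sq_nonneg _)
  field_simp
  ring

/-- The operator norm of `D P D` is at most `r = exp (n θ² / 2)`. The upper form bound controls the
lower one too because `P` has nonnegative entries; hence negative eigenvalues of `P` (the parity
obstruction to mixing) do no harm. -/
theorem tilted_norm_le (hn : 1 ≤ n) (hb : 0 ≤ b) (hθ : 0 ≤ θ)
    (hf : ∀ x, -b ≤ f x ∧ f x ≤ 2 - b) (hf0 : ∑ x, f x = 0) (q : (Fin n → Bool) → ℝ) :
    ∑ x, Real.exp (θ * f x) * walkAvg q x ^ 2 ≤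
      Real.exp (n * θ ^ 2 / 2) ^ 2 * ∑ x, Real.exp (-(θ * f x)) * q x ^ 2 := by
  have key := tilted_form_le f b θ hn hb hθ hf hf0
  set r := Real.exp (n * θ ^ 2 / 2) with hr
  have hr0 : 0 < r := Real.exp_pos _
  have habs : ∀ w : (Fin n → Bool) → ℝ, -∑ x, w x * walkAvg w x ≤
      r * ∑ x, Real.exp (-(θ * f x)) * w x ^ 2 := fun w => by
    have h := key (fun x => |w x|)
    simp only [sq_abs] at h
    refine le_trans ?_ h
    rw [← Finset.sum_neg_distrib]
    refine Finset.sum_le_sum fun x _ => ?_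
    calc -(w x * walkAvg w x) ≤ |w x * walkAvg w x| := neg_le_abs _
      _ = |w x| * |walkAvg w x| := abs_mul _ _
      _ ≤ _ := by gcongr; exact abs_walkAvg_le _ _
  -- Polarisation, using the symmetry of `P`.
  have hpol : ∀ p : (Fin n → Bool) → ℝ, ∑ x, p x * walkAvg q x ≤
      r / 2 * (∑ x, Real.exp (-(θ * f x)) * p x ^ 2 +
        ∑ x, Real.exp (-(θ * f x)) * q x ^ 2) := fun p => by
    have h1 := key (fun x => p x + q x)
    have h2 := habs (fun x => p x - q x)
    simp only [walkAvg_add, walkAvg_sub] at h1 h2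
    have e1 : ∑ x, (p x + q x) * (walkAvg p x + walkAvg q x) -
        ∑ x, (p x - q x) * (walkAvg p x - walkAvg q x) = 4 * ∑ x, p x * walkAvg q x := by
      have : ∑ x, (p x + q x) * (walkAvg p x + walkAvg q x) -
          ∑ x, (p x - q x) * (walkAvg p x - walkAvg q x) =
          2 * ∑ x, p x * walkAvg q x + 2 * ∑ x, q x * walkAvg p x := by
        rw [Finset.mul_sum, Finset.mul_sum, ← Finset.sum_add_distrib, ← Finset.sum_sub_distrib]
        exact Finset.sum_congr rfl fun x _ => by ring
      rw [this, walkAvg_symm q p]; ring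
    have e2 : ∑ x, Real.exp (-(θ * f x)) * (p x + q x) ^ 2 +
        ∑ x, Real.exp (-(θ * f x)) * (p x - q x) ^ 2 =
        2 * (∑ x, Real.exp (-(θ * f x)) * p x ^ 2 +
          ∑ x, Real.exp (-(θ * f x)) * q x ^ 2) := by
      rw [← Finset.sum_add_distrib, ← Finset.sum_add_distrib, Finset.mul_sum]
      exact Finset.sum_congr rfl fun x _ => by ring
    have e3 := congrArg (fun z => r * z) e2
    simp only [mul_add] at e3
    linarith
  -- With `q = D v`, this test function is `D u` for `u = r⁻¹ D P D v`; the bound then rearranges to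
  -- `‖D P D v‖ ≤ r ‖v‖`.
  have h := hpol (fun x => r⁻¹ * (Real.exp (θ * f x) * walkAvg q x))
  have e1 : ∑ x, r⁻¹ * (Real.exp (θ * f x) * walkAvg q x) * walkAvg q x =
      r⁻¹ * ∑ x, Real.exp (θ * f x) * walkAvg q x ^ 2 := by
    rw [Finset.mul_sum]
    exact Finset.sum_congr rfl fun x _ => by ring
  have e2 : ∑ x, Real.exp (-(θ * f x)) * (r⁻¹ * (Real.exp (θ * f x) * walkAvg q x)) ^ 2 =
      r⁻¹ ^ 2 * ∑ x, Real.exp (θ * f x) * walkAvg q x ^ 2 := by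
    rw [Finset.mul_sum]
    refine Finset.sum_congr rfl fun x _ => ?_
    rw [Real.exp_neg]
    field_simp
  rw [e1, e2] at h
  have h' := mul_le_mul_of_nonneg_left h (by positivity : 0 ≤ 2 * r)
  have e3 : 2 * r * (r⁻¹ * ∑ x, Real.exp (θ * f x) * walkAvg q x ^ 2) =
      2 * ∑ x, Real.exp (θ * f x) * walkAvg q x ^ 2 := by field_simp
  have e4 : 2 * r * (r / 2 * (r⁻¹ ^ 2 * ∑ x, Real.exp (θ * f x) * walkAvg q x ^ 2 +
      ∑ x, Real.exp (-(θ * f x)) * q x ^ 2)) = ∑ x, Real.exp (θ * f x) * walkAvg q x ^ 2 +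
      r ^ 2 * ∑ x, Real.exp (-(θ * f x)) * q x ^ 2 := by field_simp
  rw [e3, e4] at h'
  linarith

/-- `tiltedIter f θ k x` is the expectation of `exp (θ ∑_{t ≤ k} f (x_t))` over the walk
`x_0 = x, x_1, …, x_k`, computed by conditioning on the first step. -/
def tiltedIter : ℕ → (Fin n → Bool) → ℝ
  | 0, x => Real.exp (θ * f x)
  | k + 1, x => Real.exp (θ * f x) * walkAvg (tiltedIter k) x

/-- Hoeffding's lemma for the uniform starting point. -/
theorem sum_exp_le (hf : ∀ x, -b ≤ f x ∧ f x ≤ 2 - b) (hf0 : ∑ x, f x = 0) :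
    ∑ x, Real.exp (θ * f x) ≤ 2 ^ n * Real.exp (θ ^ 2 / 2) := by
  have hI : ∀ F : (Fin n → Bool) → ℝ,
      ∫ x, F x ∂(PMF.uniformOfFintype (Fin n → Bool)).toMeasure = (2 ^ n)⁻¹ * ∑ x, F x := by
    intro F
    rw [PMF.integral_eq_sum, Finset.mul_sum]
    simp
  have h := (ProbabilityTheory.hasSubgaussianMGF_of_mem_Icc_of_integral_eq_zero
    (μ := (PMF.uniformOfFintype (Fin n → Bool)).toMeasure) (X := f) (a := -b) (b := 2 - b)
    (measurable_of_finite f).aemeasurable (Filter.Eventually.of_forall hf)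
    (by rw [hI, hf0, mul_zero])).mgf_le θ
  rw [ProbabilityTheory.mgf, hI, inv_mul_le_iff₀ (by positivity)] at h
  simpa using h

/-- Moment generating function bound for the walk started uniformly and making `k` steps. -/
theorem sum_tiltedIter_le (hn : 1 ≤ n) (hb : 0 ≤ b) (hθ : 0 ≤ θ)
    (hf : ∀ x, -b ≤ f x ∧ f x ≤ 2 - b) (hf0 : ∑ x, f x = 0) (k : ℕ) :
    ∑ x, tiltedIter f θ k x ≤ 2 ^ n * Real.exp (n * θ ^ 2 / 2) ^ (k + 1) := by
  set r := Real.exp (n * θ ^ 2 / 2) with hr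
  have hr0 : 0 < r := Real.exp_pos _
  set Z := ∑ x, Real.exp (θ * f x) with hZ
  have hZ0 : 0 ≤ Z := Finset.sum_nonneg fun x _ => (Real.exp_pos _).le
  have h1 : ∑ x, Real.exp (-(θ * f x)) * tiltedIter f θ k x ^ 2 ≤ (r ^ k) ^ 2 * Z := by
    induction k with
    | zero =>
      simp only [tiltedIter, pow_zero, one_pow, one_mul]
      refine le_of_eq (Finset.sum_congr rfl fun x _ => ?_)
      rw [Real.exp_neg]
      field_simp
    | succ k ih =>
      have e : ∑ x, Real.exp (-(θ * f x)) * tiltedIter f θ (k + 1) x ^ 2 =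
          ∑ x, Real.exp (θ * f x) * walkAvg (tiltedIter f θ k) x ^ 2 := by
        refine Finset.sum_congr rfl fun x _ => ?_
        simp only [tiltedIter]
        rw [Real.exp_neg]
        field_simp
      rw [e]
      refine (tilted_norm_le f b θ hn hb hθ hf hf0 _).trans ?_
      rw [pow_succ r k, mul_pow, mul_comm ((r ^ k) ^ 2), mul_assoc]
      gcongr
  have h2 : (∑ x, tiltedIter f θ k x) ^ 2 ≤
      Z * ∑ x, Real.exp (-(θ * f x)) * tiltedIter f θ k x ^ 2 := by
    refine Finset.sum_sq_le_sum_mul_sum_of_sq_le_mul _ (fun x _ => (Real.exp_pos _).le)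
      (fun x _ => by positivity) (fun x _ => le_of_eq ?_)
    rw [← mul_assoc, ← Real.exp_add, add_neg_cancel, Real.exp_zero, one_mul]
  have h3 : (∑ x, tiltedIter f θ k x) ^ 2 ≤ (r ^ k * Z) ^ 2 :=
    h2.trans ((mul_le_mul_of_nonneg_left h1 hZ0).trans_eq (by ring))
  have h4 := abs_le_of_sq_le_sq' h3 (by positivity)
  have h5 : Z ≤ 2 ^ n * r := by
    refine (sum_exp_le f b θ hf hf0).trans ?_
    rw [hr]
    gcongr
    have : (1 : ℝ) ≤ n := by exact_mod_cast hn
    nlinarith [sq_nonneg θ]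
  calc _ ≤ r ^ k * Z := h4.2
    _ ≤ r ^ k * (2 ^ n * r) := by gcongr
    _ = _ := by ring

end Tilted

/-! ### Expectations over walks -/

lemma rwPoint_succ' {n : ℕ} (x : Fin n → Bool) (i : ℕ → Fin n) (t : ℕ) :
    rwPoint x i (t + 1) = rwPoint (flipAt x (i 0)) (fun s => i (s + 1)) t := by
  induction t with
  | zero => rfl
  | succ t ih => rw [rwPoint, ih, rwPoint]

/-- Summing over all choices of the `k` flipped coordinates; the default `d` fills the entries of
the sequence that the first `k` steps never read. -/
theorem sum_paths_eq {n : ℕ} (hn : 1 ≤ n) (f : (Fin n → Bool) → ℝ) (θ : ℝ) (d : Fin n) (k : ℕ)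
    (x : Fin n → Bool) :
    ∑ j : Fin k → Fin n, Real.exp (θ * ∑ t ∈ Finset.range (k + 1),
      f (rwPoint x (fun s => if h : s < k then j ⟨s, h⟩ else d) t)) =
      n ^ k * tiltedIter f θ k x := by
  have hn' : (n : ℝ) ≠ 0 := by positivity
  induction k generalizing x with
  | zero => simp [rwPoint, tiltedIter]
  | succ k ih =>
    rw [sum_cons]
    have : ∀ (a : Fin n) (j : Fin k → Fin n), Real.exp (θ * ∑ t ∈ Finset.range (k + 1 + 1),
        f (rwPoint x (fun s => if h : s < k + 1 then
          (Fin.cons a j : Fin (k + 1) → Fin n) ⟨s, h⟩ else d) t)) =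
        Real.exp (θ * f x) * Real.exp (θ * ∑ t ∈ Finset.range (k + 1),
          f (rwPoint (flipAt x a) (fun s => if h : s < k then j ⟨s, h⟩ else d) t)) := by
      intro a j
      rw [← Real.exp_add, ← mul_add, Finset.sum_range_succ', add_comm]
      congr 3
      refine Finset.sum_congr rfl fun t _ => ?_
      rw [rwPoint_succ']
      congr 2
      funext s
      by_cases hs : s < k
      · simp only [hs, Nat.add_lt_add_iff_right, dite_true]
        exact Fin.cons_succ (α := fun _ => Fin n) a j ⟨s, hs⟩
      · simp [hs]
    simp only [this, ← Finset.mul_sum, ih, tiltedIter, walkAvg]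
    field_simp
    ring

/-- The sequence of coordinates flipped along the walk encoded by `i`: entry `0` of `i` is
only the junk value for `s + 1 ≥ m`, which the first `m` points never read. -/
abbrev stepSeq {n m : ℕ} (hm1 : 1 ≤ m) (i : Fin m → Fin n) (s : ℕ) : Fin n :=
  if h : s + 1 < m then i ⟨s + 1, h⟩ else i ⟨0, by omega⟩

theorem mgf_walk_le {n m : ℕ} (hn : 1 ≤ n) (hm1 : 1 ≤ m) (f : (Fin n → Bool) → ℝ) (b θ : ℝ)
    (hb : 0 ≤ b) (hθ : 0 ≤ θ) (hf : ∀ x, -b ≤ f x ∧ f x ≤ 2 - b) (hf0 : ∑ x, f x = 0) :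
    ∑ ω : (Fin n → Bool) × (Fin m → Fin n), Real.exp (θ * ∑ t ∈ Finset.range m,
      f (rwPoint ω.1 (stepSeq hm1 ω.2) t)) ≤
      2 ^ n * n ^ m * Real.exp (m * (n * θ ^ 2 / 2)) := by
  obtain ⟨k, rfl⟩ : ∃ k, m = k + 1 := ⟨m - 1, by omega⟩
  have h : ∀ x : Fin n → Bool, ∑ i : Fin (k + 1) → Fin n, Real.exp (θ * ∑ t ∈ Finset.range (k + 1),
      f (rwPoint x (stepSeq hm1 i) t)) = n ^ (k + 1) * tiltedIter f θ k x := by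
    intro x
    rw [sum_cons]
    have : ∀ (a : Fin n) (j : Fin k → Fin n), Real.exp (θ * ∑ t ∈ Finset.range (k + 1),
        f (rwPoint x (stepSeq hm1 (Fin.cons a j : Fin (k + 1) → Fin n)) t)) =
        Real.exp (θ * ∑ t ∈ Finset.range (k + 1),
          f (rwPoint x (fun s => if h : s < k then j ⟨s, h⟩ else a) t)) := by
      intro a j
      congr 3
      funext t
      congr 2
      funext s
      by_cases hs : s < k
      · simp only [stepSeq, hs, Nat.add_lt_add_iff_right, dite_true]
        exact Fin.cons_succ (α := fun _ => Fin n) a j ⟨s, hs⟩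
      · simp only [stepSeq, hs, Nat.add_lt_add_iff_right, dite_false]
        rfl
    simp only [this, sum_paths_eq hn]
    simp
    ring
  rw [Fintype.sum_prod_type]
  simp only [h]
  rw [← Finset.mul_sum]
  have h2 := sum_tiltedIter_le f b θ hn hb hθ hf hf0 k
  calc _ ≤ (n : ℝ) ^ (k + 1) * (2 ^ n * Real.exp (n * θ ^ 2 / 2) ^ (k + 1)) := by gcongr
    _ = _ := by rw [Real.exp_nat_mul]; ring

/-! ### Tail bounds -/

/-- Chernoff bound for the upper tail. -/
theorem card_upper_le {n m : ℕ} (hn : 1 ≤ n) (hm1 : 1 ≤ m) (g : (Fin n → Bool) → ℝ)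
    (hg : ∀ x, g x ∈ Set.Icc (-1 : ℝ) 1) (ε : ℝ) (hε : 0 < ε) :
    ({ω : (Fin n → Bool) × (Fin m → Fin n) |
      ε < (1 / (m : ℝ)) * (∑ t ∈ Finset.range m, g (rwPoint ω.1 (stepSeq hm1 ω.2) t)) -
        (2 ^ n : ℝ)⁻¹ * ∑ z, g z}.ncard : ℝ) ≤
      2 ^ n * n ^ m * Real.exp (-(m * ε ^ 2 / (2 * n))) := by
  classical
  have hn' : (0 : ℝ) < n := by exact_mod_cast hn
  have hm' : (0 : ℝ) < m := by exact_mod_cast hm1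
  set μ := (2 ^ n : ℝ)⁻¹ * ∑ z, g z with hμ
  have hμ1 : -1 ≤ μ := by
    rw [hμ, le_inv_mul_iff₀ (by positivity)]
    have := Finset.card_nsmul_le_sum Finset.univ g (-1) (fun x _ => (hg x).1)
    simpa using this
  have hf : ∀ x, -(1 + μ) ≤ g x - μ ∧ g x - μ ≤ 2 - (1 + μ) := fun x =>
    ⟨by linarith [(hg x).1], by linarith [(hg x).2]⟩
  have hf0 : ∑ x, (g x - μ) = 0 := by
    rw [Finset.sum_sub_distrib, hμ]
    simp
  -- `θ = ε / n` optimises the Chernoff bound `exp (m n θ² / 2 - θ m ε)`.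
  have h := mgf_walk_le hn hm1 (fun x => g x - μ) (1 + μ) (ε / n) (by linarith) (by positivity)
    hf hf0
  rw [Set.ncard_eq_toFinset_card']
  set B := Set.toFinset {ω : (Fin n → Bool) × (Fin m → Fin n) |
      ε < (1 / (m : ℝ)) * (∑ t ∈ Finset.range m, g (rwPoint ω.1 (stepSeq hm1 ω.2) t)) - μ}
  have h2 : (B.card : ℝ) * Real.exp (m * ε ^ 2 / n) ≤
      2 ^ n * n ^ m * Real.exp (m * (n * (ε / n) ^ 2 / 2)) := by
    refine le_trans ?_ h
    rw [← nsmul_eq_mul]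
    refine (Finset.card_nsmul_le_sum B _ _ fun ω hω => ?_).trans
      (Finset.sum_le_sum_of_subset_of_nonneg (Finset.subset_univ B)
        fun _ _ _ => (Real.exp_pos _).le)
    have hω' : ε < (1 / (m : ℝ)) *
        (∑ t ∈ Finset.range m, g (rwPoint ω.1 (stepSeq hm1 ω.2) t)) - μ := by
      simpa [B] using hω
    apply Real.exp_le_exp.2
    rw [Finset.sum_sub_distrib, Finset.sum_const, Finset.card_range, nsmul_eq_mul]
    have h3 := mul_le_mul_of_nonneg_left hω'.le (by positivity : 0 ≤ ε / n * m)
    refine le_trans (le_of_eq (by ring)) (h3.trans (le_of_eq ?_))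
    field_simp
  rw [← le_div_iff₀ (Real.exp_pos _), mul_div_assoc, ← Real.exp_sub] at h2
  refine h2.trans_eq ?_
  congr 2
  field_simp
  ring

/-- The lower bound on `m` makes the two-sided tail at most `δ`: since `N ≥ n`, the tail is in fact
at most `δ / N`. -/
lemma two_exp_le {n m : ℕ} (hn : 1 ≤ n) (δ ε : ℝ) (hδ : 0 < δ) (hδ1 : δ < 1) (hε : 0 < ε)
    (N : ℝ) (hN : N = (⌈(n : ℝ) * Real.log ((n : ℝ) / δ)⌉ : ℤ))
    (hm : (m : ℝ) ≥ 2 * N / ε ^ 2 * Real.log (2 * N / δ)) :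
    2 * Real.exp (-(m * ε ^ 2 / (2 * n))) ≤ δ := by
  have hn' : (1 : ℝ) ≤ n := by exact_mod_cast hn
  have hNn : (n : ℝ) ≤ N := by
    have hlog : 0 < Real.log (n / δ) := Real.log_pos (by rw [lt_div_iff₀ hδ]; linarith)
    rw [hN]
    suffices h : (n : ℤ) ≤ ⌈(n : ℝ) * Real.log ((n : ℝ) / δ)⌉ by exact_mod_cast h
    -- `log (n / δ) ≥ 1` is guaranteed only from `n = 3` on; for `n ≤ 2` the ceiling makes up for it.
    have hcase : n = 1 ∨ n = 2 ∨ 3 ≤ n := by omega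
    rcases hcase with rfl | rfl | h3
    · exact Int.one_le_ceil_iff.2 (by positivity)
    · have : Real.log 2 ≤ Real.log ((2 : ℕ) / δ) :=
        Real.log_le_log (by norm_num) (by rw [le_div_iff₀ hδ]; push_cast; linarith)
      have h2 := Real.log_two_gt_d9
      have : (1 : ℤ) < ⌈((2 : ℕ) : ℝ) * Real.log (((2 : ℕ) : ℝ) / δ)⌉ :=
        Int.lt_ceil.2 (by push_cast at *; linarith)
      push_cast at *
      omega
    · have h3' : (3 : ℝ) ≤ n := by exact_mod_cast h3
      have : 1 ≤ Real.log (n / δ) := by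
        rw [Real.le_log_iff_exp_le (by positivity), le_div_iff₀ hδ]
        nlinarith [Real.exp_one_lt_d9]
      have h5 : (n : ℝ) ≤ n * Real.log (n / δ) := by nlinarith
      exact_mod_cast h5.trans (Int.le_ceil _)
  have hN0 : 0 < N := by linarith
  have hL : 0 ≤ Real.log (2 * N / δ) :=
    Real.log_nonneg (by rw [le_div_iff₀ hδ]; linarith)
  have hexp : Real.log (2 * N / δ) ≤ m * ε ^ 2 / (2 * n) := by
    rw [le_div_iff₀ (by positivity)]
    have h1 : 2 * N * Real.log (2 * N / δ) ≤ m * ε ^ 2 := by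
      have := mul_le_mul_of_nonneg_right hm (sq_nonneg ε)
      refine le_trans (le_of_eq ?_) this
      field_simp
    nlinarith
  calc 2 * Real.exp (-(m * ε ^ 2 / (2 * n))) ≤ 2 * Real.exp (-Real.log (2 * N / δ)) := by
        gcongr
    _ = δ / N := by
        rw [Real.exp_neg, Real.exp_log (by positivity)]
        field_simp
    _ ≤ δ := div_le_self hδ.le (by linarith)

/-- concentration for labeled random walks: for `g : {-1,1}^n → [-1,1]`,
`δ, ε > 0`, `N = ⌈n ln(n/δ)⌉` and `m ≥ (2N/ε²) ln(2N/δ)`, a random walk `x^1, …, x^m`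
(chosen uniformly: `x^1` uniform and each subsequent step flipping a uniform coordinate)
satisfies `|(1/m) ∑_i g(x^i) − E_x[g(x)]| ≤ ε` with probability at least `1 − δ`. -/
theorem stmt8 {n m : ℕ} (hn : 1 ≤ n) (hm1 : 1 ≤ m)
    (g : (Fin n → Bool) → ℝ) (hg : ∀ x, g x ∈ Set.Icc (-1 : ℝ) 1)
    (δ ε : ℝ) (hδ : 0 < δ) (hε : 0 < ε)
    (N : ℝ) (hN : N = (⌈(n : ℝ) * Real.log ((n : ℝ) / δ)⌉ : ℤ))
    (hm : (m : ℝ) ≥ 2 * N / ε ^ 2 * Real.log (2 * N / δ)) :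
    (1 : ℝ) - δ ≤
      ({ω : (Fin n → Bool) × (Fin m → Fin n) |
          |(1 / (m : ℝ)) * (∑ t ∈ Finset.range m,
              g (rwPoint ω.1
                  (fun s => if h : s + 1 < m then ω.2 ⟨s + 1, h⟩ else ω.2 ⟨0, by omega⟩)
                  t)) -
            (2 ^ n : ℝ)⁻¹ * ∑ z : Fin n → Bool, g z| ≤ ε}.ncard : ℝ) /
        (Fintype.card ((Fin n → Bool) × (Fin m → Fin n)) : ℝ) := by
  rcases le_or_gt 1 δ with hδ1 | hδ1
  · exact (sub_nonpos.2 hδ1).trans (by positivity)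
  have hn' : (0 : ℝ) < n := by exact_mod_cast hn
  have hcard : (Fintype.card ((Fin n → Bool) × (Fin m → Fin n)) : ℝ) = 2 ^ n * n ^ m := by simp
  rw [hcard, le_div_iff₀ (by positivity)]
  have hup := card_upper_le hn hm1 g hg ε hε
  have hlo := card_upper_le hn hm1 (fun x => -g x)
    (fun x => ⟨by linarith [(hg x).2], by linarith [(hg x).1]⟩) ε hε
  have hδ' := two_exp_le hn δ ε hδ hδ1 hε N hN hm
  set S : (Fin n → Bool) × (Fin m → Fin n) → ℝ := fun ω => (1 / (m : ℝ)) *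
    (∑ t ∈ Finset.range m, g (rwPoint ω.1 (stepSeq hm1 ω.2) t)) -
      (2 ^ n : ℝ)⁻¹ * ∑ z, g z with hS
  have hlo' : ({ω | ε < -S ω}.ncard : ℝ) ≤
      2 ^ n * n ^ m * Real.exp (-(m * ε ^ 2 / (2 * n))) := by
    refine le_trans (le_of_eq ?_) hlo
    congr 3
    ext ω
    rw [hS]
    simp only [Finset.sum_neg_distrib, mul_neg, neg_sub, sub_neg_eq_add, neg_add_eq_sub]
  change (1 - δ) * (2 ^ n * n ^ m) ≤ ({ω | |S ω| ≤ ε}.ncard : ℝ)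
  change ({ω | ε < S ω}.ncard : ℝ) ≤ _ at hup
  have hcompl : ({ω | |S ω| ≤ ε}.ncard : ℝ) + ({ω | |S ω| ≤ ε}ᶜ.ncard : ℝ) = 2 ^ n * n ^ m := by
    rw [← hcard, ← Nat.card_eq_fintype_card, ← Set.ncard_add_ncard_compl {ω | |S ω| ≤ ε}]
    push_cast
    rfl
  have hsub : ({ω | |S ω| ≤ ε}ᶜ.ncard : ℝ) ≤ {ω | ε < S ω}.ncard + {ω | ε < -S ω}.ncard := by
    have h1 : {ω | |S ω| ≤ ε}ᶜ ⊆ {ω | ε < S ω} ∪ {ω | ε < -S ω} := fun ω hω => by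
      simpa [lt_abs] using hω
    exact_mod_cast (Set.ncard_le_ncard h1).trans (Set.ncard_union_le _ _)
  have hT : (0 : ℝ) < 2 ^ n * n ^ m := by positivity
  nlinarith [mul_le_mul_of_nonneg_left hδ' hT.le]
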